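/- (Forwarding case.) Consider the feedforward system dy/dt = h(x), dx/dt = f(x) + g(x)u with y ∈ ℝ, x ∈ ℝ^{n_x}, u ∈ ℝ^p, where h, f, g are smooth, h(0) = 0, f(0) = 0. Set H := Dh(0) ∈ ℝ^{1×n_x}, F := Df(0), G := g(0), and let A be the (1+n_x)×(1+n_x) block matrix [[0, H],[0, F]] and B := [0; G]. Assume: for every K_x ∈ ℝ^{p×n_x} and every positive definite P_x ∈ ℝ^{n_x×n_x} with P_x(F + GK_x) + (F + GK_x)ᵀP_x negative definite, there exists a smooth proper positive definite function V_x: ℝ^{n_x} → ℝ≥0 with (1/2)·H(V_x)(0) = P_x and such that for every x ≠ 0, ∇V_x(x)ᵀg(x) = 0 implies ∇V_x(x)·f(x) < 0. Then for every K ∈ ℝ^{p×(1+n_x)} such that A + BK is Hurwitz, there exists a smooth map α₀: ℝ^{1+n_x} → ℝ^p with α₀(0) = 0 and Dα₀(0) = K such that the origin of the closed-loop system (dy/dt, dx/dt) = (h(x), f(x) + g(x)α₀(y,x)) is globally asymptotically stable. -/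

import Mathlib

open Matrix Filter Topology Asymptotics

noncomputable section

/-- `V` is proper: `V χ → ∞` as `‖χ‖ → ∞`. -/
def IsProper {E : Type*} [NormedAddCommGroup E] (V : E → ℝ) : Prop :=
  Filter.Tendsto V (Bornology.cobounded E) Filter.atTop

/-- `V` is positive definite: `V 0 = 0` and `V x > 0` for `x ≠ 0`. -/
def IsPosDefFn {E : Type*} [NormedAddCommGroup E] (V : E → ℝ) : Prop :=
  V 0 = 0 ∧ ∀ x : E, x ≠ 0 → 0 < V x

/-- The Hessian matrix of `V` at `x`. -/
def hessianAt {n : ℕ} (V : (Fin n → ℝ) → ℝ) (x : Fin n → ℝ) :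
    Matrix (Fin n) (Fin n) ℝ :=
  Matrix.of fun i j => iteratedFDeriv ℝ 2 V x ![Pi.single i 1, Pi.single j 1]

/-- A real square matrix is Hurwitz if all of its (complex) eigenvalues have
negative real part. -/
def Hurwitz {ι : Type*} [Fintype ι] [DecidableEq ι] (M : Matrix ι ι ℝ) : Prop :=
  ∀ μ : ℂ, μ ∈ spectrum ℂ (M.map (algebraMap ℝ ℂ)) → μ.re < 0

/-- Global asymptotic stability of the origin for `χ' = F (χ)`:
(i) Lyapunov stability of the origin, and (ii) for every initial condition there is a
solution defined on all of `[0, ∞)` converging to the origin (for a locally Lipschitz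
vector field, by uniqueness of solutions, this is equivalent to requiring every maximal
solution to be defined on `[0,∞)` and to converge to the origin). -/
def IsGAS {E : Type*} [NormedAddCommGroup E] [NormedSpace ℝ E] (F : E → E) : Prop :=
  (∀ ε > 0, ∃ δ > 0, ∀ (χ : ℝ → E) (T : ℝ),
      (∀ t ∈ Set.Ico (0:ℝ) T, HasDerivAt χ (F (χ t)) t) →
      ‖χ 0‖ ≤ δ → ∀ t ∈ Set.Ico (0:ℝ) T, ‖χ t‖ ≤ ε) ∧
  (∀ x₀ : E, ∃ χ : ℝ → E, χ 0 = x₀ ∧ (∀ t : ℝ, 0 ≤ t → HasDerivAt χ (F (χ t)) t) ∧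
      Filter.Tendsto χ Filter.atTop (nhds 0))

/-!
A Lyapunov matrix `P` of `A + B K`, diagonalized blockwise as a quadratic form in `x` plus one in
`e = y - m ⬝ᵥ x`, yields a Lyapunov matrix of the `x`-subsystem under the feedback restricted to
`e = 0`. The assumption provides a control Lyapunov function `V` with this Hessian. For the cascade
take `l(V x) + ψ(e)`. Close to the origin it decreases under `K`. Since `ψ'` is small, a value of
`l'` that grows fast enough with `V` makes the `e`-terms harmless far from `x = 0`, where `V` can be
made to decrease; so the composite function is a control Lyapunov function decreasing under `K`
near the origin. A partition of unity glues `K` to feedbacks that decrease it elsewhere.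
-/

section ProperPosDef

variable {E E' : Type*} [NormedAddCommGroup E] [NormedAddCommGroup E'] {V : E → ℝ}

lemma IsPosDefFn.nonneg (hV : IsPosDefFn V) (x : E) : 0 ≤ V x := by
  rcases eq_or_ne x 0 with rfl | hx
  exacts [hV.1.ge, (hV.2 x hx).le]

lemma IsPosDefFn.comp_equiv [NormedSpace ℝ E] [NormedSpace ℝ E'] (hV : IsPosDefFn V)
    (Φ : E' ≃L[ℝ] E) : IsPosDefFn (V ∘ Φ) :=
  ⟨by simp [hV.1], fun x hx => hV.2 _ (by simpa using hx)⟩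

lemma IsProper.comp_equiv [NormedSpace ℝ E] [NormedSpace ℝ E'] (hV : IsProper V)
    (Φ : E' ≃L[ℝ] E) : IsProper (V ∘ Φ) :=
  Tendsto.comp hV Φ.antilipschitz.tendsto_cobounded

lemma IsPosDefFn.fderiv_zero [NormedSpace ℝ E] (hV : IsPosDefFn V) : fderiv ℝ V 0 = 0 :=
  IsLocalMin.fderiv_eq_zero <| Eventually.of_forall fun x => hV.1.le.trans (hV.nonneg x)

lemma IsProper.isBounded_sublevel (hV : IsProper V) (c : ℝ) :
    Bornology.IsBounded {x | V x ≤ c} := by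
  rw [← Bornology.isCobounded_compl_iff]
  filter_upwards [hV.eventually_gt_atTop c] with x hx using not_le.2 hx

lemma IsProper.isCompact_sublevel [ProperSpace E] (hV : IsProper V) (hc : Continuous V) (c : ℝ) :
    IsCompact {x | V x ≤ c} :=
  Metric.isCompact_of_isClosed_isBounded (isClosed_le hc continuous_const)
    (hV.isBounded_sublevel c)

lemma IsProper.exists_sublevel_subset [ProperSpace E] (hV : IsProper V) (hpos : IsPosDefFn V)
    (hc : Continuous V) {s : Set E} (hs : s ∈ 𝓝 0) : ∃ c > 0, ∀ x, V x < c → x ∈ s := by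
  have hK : IsCompact ({x | V x ≤ 1} \ interior s) :=
    (hV.isCompact_sublevel hc 1).diff isOpen_interior
  obtain ⟨c, hc0, hcK⟩ := hK.exists_forall_le' hc.continuousOn (a := 0) fun x hx =>
    hpos.2 x fun h0 => hx.2 (h0 ▸ mem_interior_iff_mem_nhds.2 hs)
  refine ⟨min 1 c, lt_min one_pos hc0, fun x hx => interior_subset ?_⟩
  by_contra hxs
  exact (hcK x ⟨(hx.trans_le (min_le_left _ _)).le, hxs⟩).not_gt (hx.trans_le (min_le_right _ _))

end ProperPosDef

section Lyapunov

variable {E : Type*} [NormedAddCommGroup E] [NormedSpace ℝ E] {V : E → ℝ} {X : E → E}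

open scoped Manifold in
lemma exists_forall_hasDerivAt_of_hasCompactSupport [CompleteSpace E] (hX : ContDiff ℝ 1 X)
    (hsupp : HasCompactSupport X) (x₀ : E) :
    ∃ χ : ℝ → E, χ 0 = x₀ ∧ ∀ t, HasDerivAt χ (X (χ t)) t := by
  obtain ⟨K, hK⟩ := hX.lipschitzWith_of_hasCompactSupport hsupp one_ne_zero
  obtain ⟨C, hC⟩ := hsupp.exists_bound_of_continuous hX.continuous
  lift C to NNReal using (norm_nonneg _).trans (hC 0)
  have hlocal (x : E) : ∃ χ : ℝ → E, χ 0 = x ∧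
      IsMIntegralCurveOn (I := 𝓘(ℝ, E)) χ X (Set.Ioo (-1) 1) := by
    have hpl : IsPicardLindelof (fun _ => X) (tmin := -1) (tmax := 1) ⟨0, by simp⟩ x C 0 C K :=
      .of_time_independent (fun x _ => hC x) hK.lipschitzOnWith (by simp)
    obtain ⟨χ, h0, hχ⟩ := hpl.exists_eq_forall_mem_Icc_hasDerivWithinAt₀
    exact ⟨χ, h0, fun t ht => ((hχ t ⟨ht.1.le, ht.2.le⟩).mono
      Set.Ioo_subset_Icc_self).hasFDerivWithinAt.hasMFDerivWithinAt⟩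
  have hX' : CMDiff 1 (fun x => (⟨x, X x⟩ : TangentBundle 𝓘(ℝ, E) E)) :=
    contMDiff_vectorSpace_iff_contDiff.2 hX
  obtain ⟨χ, h0, hχ⟩ := exists_isMIntegralCurve_of_isMIntegralCurveOn hX' one_pos hlocal x₀
  exact ⟨χ, h0, fun t => hasDerivAt_iff_hasFDerivAt.2 (hχ t).hasFDerivAt⟩

lemma image_sub_le_mul_sub_of_fderiv_le (hV : Differentiable ℝ V) {χ : ℝ → E} {s : Set ℝ}
    (hs : Convex ℝ s) (hχ : ∀ t ∈ s, HasDerivAt χ (X (χ t)) t) {C : ℝ}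
    (hC : ∀ t ∈ s, fderiv ℝ V (χ t) (X (χ t)) ≤ C) {a b : ℝ} (ha : a ∈ s) (hb : b ∈ s)
    (hab : a ≤ b) : V (χ b) - V (χ a) ≤ C * (b - a) := by
  have hd (t) (ht : t ∈ s) : HasDerivAt (V ∘ χ) (fderiv ℝ V (χ t) (X (χ t))) t :=
    (hV (χ t)).hasFDerivAt.comp_hasDerivAt t (hχ t ht)
  exact hs.image_sub_le_mul_sub_of_deriv_le
    (fun t ht => (hd t ht).continuousAt.continuousWithinAt)
    (fun t ht => (hd t (interior_subset ht)).differentiableAt.differentiableWithinAt)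
    (fun t ht => (hd t (interior_subset ht)).deriv ▸ hC t (interior_subset ht)) a ha b hb hab

lemma antitoneOn_comp_of_fderiv_nonpos (hV : Differentiable ℝ V)
    (hX : ∀ z, fderiv ℝ V z (X z) ≤ 0) {χ : ℝ → E} {s : Set ℝ} (hs : Convex ℝ s)
    (hχ : ∀ t ∈ s, HasDerivAt χ (X (χ t)) t) : AntitoneOn (V ∘ χ) s := fun a ha b hb hab => by
  simpa using image_sub_le_mul_sub_of_fderiv_le hV hs hχ (fun t _ => hX (χ t)) ha hb hab

lemma exists_forall_hasDerivAt_of_fderiv_nonpos [FiniteDimensional ℝ E] (hV : Differentiable ℝ V)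
    (hproper : IsProper V) (hX : ContDiff ℝ 1 X) (hdecr : ∀ z, fderiv ℝ V z (X z) ≤ 0) (x₀ : E) :
    ∃ χ : ℝ → E, χ 0 = x₀ ∧ ∀ t ≥ 0, HasDerivAt χ (X (χ t)) t := by
  obtain ⟨r, hr⟩ := (hproper.isBounded_sublevel (V x₀)).subset_closedBall 0
  have hr0 : 0 ≤ r := dist_nonneg.trans (hr (le_refl (V x₀)))
  let φ : ContDiffBump (0 : E) := ⟨r + 1, r + 2, by linarith, by linarith⟩
  obtain ⟨χ, h0, hχ⟩ := exists_forall_hasDerivAt_of_hasCompactSupport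
    (X := fun z => φ z • X z) (φ.contDiff.smul hX) φ.hasCompactSupport.smul_right x₀
  have hanti : AntitoneOn (V ∘ χ) (Set.Ici 0) :=
    antitoneOn_comp_of_fderiv_nonpos (X := fun z => φ z • X z) hV
      (fun z => by simpa using mul_nonpos_of_nonneg_of_nonpos φ.nonneg (hdecr z))
      (convex_Ici 0) (fun t _ => hχ t)
  refine ⟨χ, h0, fun t ht => ?_⟩
  have hφ : φ (χ t) = 1 := φ.one_of_mem_closedBall <|
    Metric.closedBall_subset_closedBall (by simp [φ]) <|
      hr (h0 ▸ hanti Set.self_mem_Ici ht ht)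
  simpa [hφ] using hχ t

lemma exists_lt_of_fderiv_neg [ProperSpace E] (hV : ContDiff ℝ 1 V) (hproper : IsProper V)
    (hpos : IsPosDefFn V) (hX : Continuous X) (hneg : ∀ z ≠ 0, fderiv ℝ V z (X z) < 0)
    {χ : ℝ → E} (hχ : ∀ t ≥ 0, HasDerivAt χ (X (χ t)) t)
    (hanti : AntitoneOn (V ∘ χ) (Set.Ici 0)) {c : ℝ} (hc : 0 < c) : ∃ t ≥ 0, V (χ t) < c := by
  by_contra! hge
  let S := {z | V z ≤ V (χ 0)} ∩ {z | c ≤ V z}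
  have hχS (t) (ht : t ∈ Set.Ici (0 : ℝ)) : χ t ∈ S := ⟨hanti Set.self_mem_Ici ht ht, hge t ht⟩
  have hS : IsCompact S :=
    (hproper.isCompact_sublevel hV.continuous _).inter_right
      (isClosed_le continuous_const hV.continuous)
  obtain ⟨m, hm0, hm⟩ := hS.exists_forall_le' (f := fun z => -fderiv ℝ V z (X z)) (a := 0)
    ((hV.continuous_fderiv one_ne_zero).clm_apply hX).neg.continuousOn
    fun z hz => neg_pos.2 <| hneg z fun h0 => (hc.trans_le (h0 ▸ hz.2)).ne' hpos.1
  have hT : 0 ≤ V (χ 0) / m := div_nonneg (hpos.nonneg _) hm0.le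
  have hdecay := image_sub_le_mul_sub_of_fderiv_le (hV.differentiable one_ne_zero) (convex_Ici 0)
    hχ (C := -m) (fun t ht => le_neg_of_le_neg (hm _ (hχS t ht))) Set.self_mem_Ici hT hT
  have : -m * (V (χ 0) / m - 0) = -V (χ 0) := by field_simp; ring
  linarith [hge _ hT]

theorem isGAS_of_fderiv_neg [FiniteDimensional ℝ E] (hV : ContDiff ℝ 1 V) (hproper : IsProper V)
    (hpos : IsPosDefFn V) (hX : ContDiff ℝ 1 X) (hneg : ∀ z ≠ 0, fderiv ℝ V z (X z) < 0) :
    IsGAS X := by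
  have : ProperSpace E := FiniteDimensional.proper ℝ E
  have hVd : Differentiable ℝ V := hV.differentiable one_ne_zero
  have hle (z : E) : fderiv ℝ V z (X z) ≤ 0 := by
    rcases eq_or_ne z 0 with rfl | hz
    exacts [by simp [hpos.fderiv_zero], (hneg z hz).le]
  refine ⟨fun ε hε => ?_, fun x₀ => ?_⟩
  · obtain ⟨c, hc, hsub⟩ := hproper.exists_sublevel_subset hpos hV.continuous
      (Metric.closedBall_mem_nhds 0 hε)
    have hnear : ∀ᶠ x in 𝓝 0, V x < c :=
      hV.continuous.continuousAt.eventually_lt_const (hpos.1.trans_lt hc)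
    obtain ⟨δ, hδ, hball⟩ := Metric.nhds_basis_closedBall.eventually_iff.1 hnear
    refine ⟨δ, hδ, fun χ T hχ h0 t ht => mem_closedBall_zero_iff.1 (hsub _ ?_)⟩
    have hanti := antitoneOn_comp_of_fderiv_nonpos hVd hle (convex_Ico 0 T) hχ
    exact (hanti ⟨le_rfl, ht.1.trans_lt ht.2⟩ ht ht.1).trans_lt
      (hball (mem_closedBall_zero_iff.2 h0))
  · obtain ⟨χ, h0, hχ⟩ := exists_forall_hasDerivAt_of_fderiv_nonpos hVd hproper hX hle x₀
    have hanti := antitoneOn_comp_of_fderiv_nonpos hVd hle (convex_Ici 0) hχ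
    refine ⟨χ, h0, hχ, tendsto_def.2 fun s hs => ?_⟩
    obtain ⟨c, hc, hsub⟩ := hproper.exists_sublevel_subset hpos hV.continuous hs
    obtain ⟨t₀, ht₀, hlt⟩ :=
      exists_lt_of_fderiv_neg hV hproper hpos hX.continuous hneg hχ hanti hc
    filter_upwards [eventually_ge_atTop t₀] with t ht
    exact hsub _ ((hanti ht₀ (ht₀.trans ht) ht).trans_lt hlt)

end Lyapunov

section ControlLyapunov

variable {E E' U : Type*} [NormedAddCommGroup E] [NormedSpace ℝ E]
  [NormedAddCommGroup E'] [NormedSpace ℝ E'] [NormedAddCommGroup U] [NormedSpace ℝ U]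

lemma exists_contDiff_forall_mem_convex_of_local [FiniteDimensional ℝ E] {t : E → Set U}
    (ht : ∀ x, Convex ℝ (t x))
    (hloc : ∀ x, ∃ s : E → U, ContDiff ℝ (⊤ : ℕ∞) s ∧ ∀ᶠ y in 𝓝 x, s y ∈ t y) :
    ∃ α : E → U, ContDiff ℝ (⊤ : ℕ∞) α ∧ ∀ x, α x ∈ t x := by
  have : ProperSpace E := FiniteDimensional.proper ℝ E
  obtain ⟨α, hα⟩ := exists_contMDiffMap_forall_mem_convex_of_local (n := (⊤ : ℕ∞))
    (modelWithCornersSelf ℝ E) ht fun x =>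
      let ⟨s, hs, hst⟩ := hloc x
      ⟨_, hst, s, hs.contMDiff.contMDiffOn, fun _ => id⟩
  exact ⟨α, α.contMDiff.contDiff, hα⟩

lemma exists_contDiff_eventuallyEq_forall_neg [FiniteDimensional ℝ E] {Γ : E → U → ℝ} {k : E → U}
    (hΓ : ∀ u, Continuous (Γ · u)) (hconv : ∀ z, ConvexOn ℝ Set.univ (Γ z))
    (hneg : ∀ z ≠ 0, ∃ u, Γ z u < 0) (hk : ContDiff ℝ (⊤ : ℕ∞) k)
    (hkneg : ∀ᶠ z in 𝓝[≠] 0, Γ z (k z) < 0) :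
    ∃ α : E → U, ContDiff ℝ (⊤ : ℕ∞) α ∧ α =ᶠ[𝓝 0] k ∧ ∀ z ≠ 0, Γ z (α z) < 0 := by
  let W : Set E := {z | z ≠ 0 → Γ z (k z) < 0}
  have hW : interior W ∈ 𝓝 0 := interior_mem_nhds.2 (eventually_nhdsWithin_iff.1 hkneg)
  obtain ⟨s, hs0, hs, hsW⟩ := exists_mem_nhds_isClosed_subset hW
  let t : E → Set U := fun z => {u | (z ≠ 0 → Γ z u < 0) ∧ (z ∈ s → u = k z)}
  have ht (z : E) : Convex ℝ (t z) := by
    have h1 : Convex ℝ {u | z ≠ 0 → Γ z u < 0} := by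
      by_cases hz : z = 0
      · simp [hz, convex_univ]
      · simpa [hz] using (hconv z).convex_lt 0
    have h2 : Convex ℝ {u | z ∈ s → u = k z} := by
      by_cases hz : z ∈ s
      · simp [hz, convex_singleton]
      · simp [hz, convex_univ]
    exact h1.inter h2
  obtain ⟨α, hα, hαt⟩ := exists_contDiff_forall_mem_convex_of_local ht fun z => by
    by_cases hz : z ∈ interior W
    · refine ⟨k, hk, ?_⟩
      filter_upwards [isOpen_interior.mem_nhds hz] with y hy
      exact ⟨fun hy0 => interior_subset hy hy0, fun _ => rfl⟩
    · have hz0 : z ≠ 0 := fun h => hz (h ▸ mem_of_mem_nhds hW)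
      obtain ⟨u, hu⟩ := hneg z hz0
      refine ⟨fun _ => u, contDiff_const, ?_⟩
      filter_upwards [(hΓ u).continuousAt.eventually_lt_const hu,
        hs.isOpen_compl.mem_nhds fun h => hz (hsW h)] with y hy hys
      exact ⟨fun _ => hy, fun h => absurd h hys⟩
  refine ⟨α, hα, ?_, fun z => (hαt z).1⟩
  filter_upwards [hs0] with z hz using (hαt z).2 hz

/-- `V` is a control Lyapunov function for the control-affine system `x' = f x + g x u`: off the
origin, some value of the control makes `V` decrease. -/
structure IsControlLyapunov (f : E → E) (g : E → U →L[ℝ] E) (V : E → ℝ) : Prop where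
  contDiff : ContDiff ℝ 1 V
  isProper : IsProper V
  isPosDefFn : IsPosDefFn V
  exists_neg : ∀ x ≠ 0, ∃ u, fderiv ℝ V x (f x + g x u) < 0

lemma exists_add_clm_neg_iff {a : ℝ} {b : U →L[ℝ] ℝ} :
    (∃ u, a + b u < 0) ↔ (b = 0 → a < 0) := by
  refine ⟨fun ⟨u, hu⟩ hb => by simpa [hb] using hu, fun h => ?_⟩
  by_cases hb : b = 0
  · exact ⟨0, by simpa using h hb⟩
  · obtain ⟨u, hu⟩ : ∃ u, b u ≠ 0 := by simpa using DFunLike.ne_iff.1 hb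
    exact ⟨(-(a + 1) / b u) • u, by simp [hu]⟩

lemma IsControlLyapunov.comp_equiv {f : E → E} {g : E → U →L[ℝ] E} {V : E → ℝ}
    (hV : IsControlLyapunov f g V) (Φ : E' ≃L[ℝ] E) :
    IsControlLyapunov (fun z => Φ.symm (f (Φ z)))
      (fun z => (Φ.symm : E →L[ℝ] E') ∘L g (Φ z)) (V ∘ Φ) where
  contDiff := hV.contDiff.comp Φ.contDiff
  isProper := hV.isProper.comp_equiv Φ
  isPosDefFn := hV.isPosDefFn.comp_equiv Φ
  exists_neg z hz := by
    simpa [Φ.comp_right_fderiv] using hV.exists_neg (Φ z) (by simpa using hz)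

theorem IsControlLyapunov.exists_feedback_isGAS [FiniteDimensional ℝ E] {f : E → E}
    {g : E → U →L[ℝ] E} {V : E → ℝ} (hV : IsControlLyapunov f g V) (hf : ContDiff ℝ 1 f)
    (hg : ContDiff ℝ 1 g) {k : E → U} (hk : ContDiff ℝ (⊤ : ℕ∞) k)
    (hkneg : ∀ᶠ x in 𝓝[≠] 0, fderiv ℝ V x (f x + g x (k x)) < 0) :
    ∃ α : E → U, ContDiff ℝ (⊤ : ℕ∞) α ∧ α =ᶠ[𝓝 0] k ∧ IsGAS (fun x => f x + g x (α x)) := by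
  have hdV : Continuous (fderiv ℝ V) := hV.contDiff.continuous_fderiv one_ne_zero
  obtain ⟨α, hα, hαk, hαneg⟩ := exists_contDiff_eventuallyEq_forall_neg
    (Γ := fun x u => fderiv ℝ V x (f x + g x u))
    (fun u => hdV.clm_apply (hf.continuous.add (hg.continuous.clm_apply continuous_const)))
    (fun x => by
      simp only [map_add]
      exact (convexOn_const _ convex_univ).add
        ((fderiv ℝ V x ∘L g x : U →L[ℝ] ℝ).toLinearMap.convexOn convex_univ))
    hV.exists_neg hk hkneg
  refine ⟨α, hα, hαk, isGAS_of_fderiv_neg hV.contDiff hV.isProper hV.isPosDefFn ?_ hαneg⟩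
  exact hf.add (hg.clm_apply (hα.of_le (by simp)))

end ControlLyapunov

section LocalDecrease

variable {E G : Type*} [NormedAddCommGroup E] [NormedSpace ℝ E]
  [NormedAddCommGroup G] [NormedSpace ℝ G]

lemma exists_forall_apply_le_neg_mul_sq_norm [FiniteDimensional ℝ E]
    {Φ' : E →L[ℝ] G →L[ℝ] ℝ} {X' : E →L[ℝ] G}
    (hneg : ∀ v ≠ 0, Φ' v (X' v) < 0) : ∃ m > 0, ∀ v, Φ' v (X' v) ≤ -m * ‖v‖ ^ 2 := by
  have : ProperSpace E := FiniteDimensional.proper ℝ E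
  have hcont : Continuous fun v => -Φ' v (X' v) := (Φ'.continuous.clm_apply X'.continuous).neg
  obtain ⟨m, hm0, hm⟩ := (isCompact_sphere (0 : E) 1).exists_forall_le' (a := 0)
    hcont.continuousOn fun v hv => neg_pos.2 (hneg v (ne_zero_of_mem_unit_sphere ⟨v, hv⟩))
  refine ⟨m, hm0, fun v => ?_⟩
  rcases eq_or_ne v 0 with rfl | hv
  · simp
  have hv0 : ‖v‖ ≠ 0 := norm_ne_zero_iff.2 hv
  have hunit := hm (‖v‖⁻¹ • v) (by simp [norm_smul, hv0])
  calc Φ' v (X' v) = Φ' (‖v‖⁻¹ • v) (X' (‖v‖⁻¹ • v)) * ‖v‖ ^ 2 := by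
        simp only [map_smul, _root_.smul_apply, smul_eq_mul]
        field_simp
    _ ≤ -m * ‖v‖ ^ 2 := by gcongr; linarith

lemma clm_apply_sub_isLittleO {Φ : E → G →L[ℝ] ℝ} {X : E → G}
    {Φ' : E →L[ℝ] G →L[ℝ] ℝ} {X' : E →L[ℝ] G} (hΦ : HasFDerivAt Φ Φ' 0) (hΦ0 : Φ 0 = 0)
    (hX : HasFDerivAt X X' 0) (hX0 : X 0 = 0) :
    (fun z => Φ z (X z) - Φ' z (X' z)) =o[𝓝 0] fun z => ‖z‖ ^ 2 := by
  have hΦo : (fun z => Φ z - Φ' z) =o[𝓝 0] fun z : E => z := by simpa [hΦ0] using hΦ.isLittleO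
  have hXo : (fun z => X z - X' z) =o[𝓝 0] fun z : E => z := by simpa [hX0] using hX.isLittleO
  have hXO : X =O[𝓝 0] fun z : E => z := by simpa [hX0] using hX.isBigO_sub
  have happly := isBoundedBilinearMap_apply (𝕜 := ℝ) (E := G) (F := ℝ)
  have h1 : (fun z => (Φ z - Φ' z) (X z)) =o[𝓝 0] fun z => ‖z‖ * ‖z‖ :=
    happly.isBigO_comp.trans_isLittleO (hΦo.norm_norm.mul_isBigO hXO.norm_norm)
  have h2 : (fun z => Φ' z (X z - X' z)) =o[𝓝 0] fun z => ‖z‖ * ‖z‖ :=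
    happly.isBigO_comp.trans_isLittleO ((Φ'.isBigO_id _).norm_norm.mul_isLittleO hXo.norm_norm)
  refine (h1.add h2).congr (fun z => ?_) fun z => (sq _).symm
  simp

lemma eventually_clm_apply_neg [FiniteDimensional ℝ E] {Φ : E → G →L[ℝ] ℝ} {X : E → G}
    {Φ' : E →L[ℝ] G →L[ℝ] ℝ} {X' : E →L[ℝ] G} (hΦ : HasFDerivAt Φ Φ' 0) (hΦ0 : Φ 0 = 0)
    (hX : HasFDerivAt X X' 0) (hX0 : X 0 = 0) (hneg : ∀ v ≠ 0, Φ' v (X' v) < 0) :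
    ∀ᶠ z in 𝓝[≠] 0, Φ z (X z) < 0 := by
  obtain ⟨m, hm0, hm⟩ := exists_forall_apply_le_neg_mul_sq_norm hneg
  have hsmall := (clm_apply_sub_isLittleO hΦ hΦ0 hX hX0).def (half_pos hm0)
  filter_upwards [nhdsWithin_le_nhds hsmall, self_mem_nhdsWithin] with z hz hz0
  have hpos : 0 < m / 2 * ‖z‖ ^ 2 :=
    mul_pos (half_pos hm0) (pow_pos (norm_pos_iff.2 hz0) 2)
  rw [Real.norm_eq_abs, norm_pow, norm_norm] at hz
  linarith [(abs_le.1 hz).2, hm z]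

end LocalDecrease

section GainScheduling

variable {E U : Type*} [NormedAddCommGroup E] {V : E → ℝ}

lemma exists_contDiff_gain [ProperSpace E] (hproper : IsProper V) (hpos : IsPosDefFn V)
    (hV : Continuous V) {R : ℝ} (hR : 0 < R) {P : ℝ → E → Prop}
    (hnear : ∀ᶠ x in 𝓝 0, ∀ q, |q| ≤ R → (q, x) ≠ 0 → P q x)
    (hfar : ∀ K : Set E, IsCompact K → 0 ∉ K → ∀ᶠ q in 𝓝 0, ∀ x ∈ K, P q x) :
    ∃ κ : ℝ → ℝ, ContDiff ℝ (⊤ : ℕ∞) κ ∧ (∀ v, 1 ≤ κ v) ∧ κ 0 = 1 ∧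
      ∀ q x, |q| * κ (V x) ≤ R → (q, x) ≠ 0 → P q x := by
  let t : ℝ → Set ℝ := fun v =>
    {k | 1 ≤ k ∧ (v = 0 → k ≤ 1) ∧ ∀ q x, V x = v → |q| * k ≤ R → (q, x) ≠ 0 → P q x}
  have ht (v : ℝ) : Convex ℝ (t v) := by
    refine Set.OrdConnected.convex ⟨fun k hk l hl m hm => ⟨hk.1.trans hm.1,
      fun h => hm.2.trans (hl.2.1 h), fun q x hx hq => hk.2.2 q x hx (le_trans ?_ hq)⟩⟩
    exact mul_le_mul_of_nonneg_left hm.1 (abs_nonneg q)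
  obtain ⟨c, hc, hsub⟩ := hproper.exists_sublevel_subset hpos hV hnear
  obtain ⟨κ, hκ, hκt⟩ := exists_contDiff_forall_mem_convex_of_local ht fun v => by
    rcases le_or_gt v 0 with hv | hv
    · refine ⟨fun _ => 1, contDiff_const, ?_⟩
      filter_upwards [Iio_mem_nhds (hv.trans_lt hc)] with w hw
      exact ⟨le_rfl, fun _ => le_rfl,
        fun q x hx hq => hsub x (hx.trans_lt hw) q (by simpa using hq)⟩
    · have hK : IsCompact ({x | V x ≤ 2 * v} ∩ {x | v / 2 ≤ V x}) :=
        (hproper.isCompact_sublevel hV _).inter_right (isClosed_le continuous_const hV)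
      obtain ⟨δ, hδ, hball⟩ := Metric.nhds_basis_closedBall.eventually_iff.1 <|
        hfar _ hK fun h0 => (half_pos hv).not_ge (h0.2.trans hpos.1.le)
      refine ⟨fun _ => 1 + R / δ, contDiff_const, ?_⟩
      filter_upwards [Ioo_mem_nhds (half_lt_self hv) (by linarith : v < 2 * v)] with w hw
      have hRδ : 0 < R / δ := div_pos hR hδ
      refine ⟨by linarith, fun h => by linarith [hw.1], fun q x hx hq _ => ?_⟩
      have hqδ : |q| ≤ δ := by
        refine le_of_mul_le_mul_right ?_ hRδ
        rw [mul_div_cancel₀ R hδ.ne']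
        linarith [abs_nonneg q]
      exact hball (by simpa using hqδ) x ⟨hx.le.trans hw.2.le, hx.ge.trans' hw.1.le⟩
  exact ⟨κ, hκ, fun v => (hκt v).1, le_antisymm ((hκt 0).2.1 rfl) (hκt 0).1,
    fun q x => (hκt (V x)).2.2 q x rfl⟩

lemma eventually_forall_exists_add_mul_neg {L M : E → U → ℝ} (hL : ∀ u, Continuous (L · u))
    (hM : ∀ u, Continuous (M · u)) {K : Set E} (hK : IsCompact K)
    (hneg : ∀ x ∈ K, ∃ u, L x u < 0) :
    ∀ᶠ q in 𝓝 (0 : ℝ), ∀ x ∈ K, ∃ u, L x u + q * M x u < 0 := by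
  refine hK.eventually_forall_of_forall_eventually fun x hx => ?_
  obtain ⟨u, hu⟩ := hneg x hx
  have hcont : Continuous fun z : ℝ × E => L z.2 u + z.1 * M z.2 u := by fun_prop
  filter_upwards [hcont.continuousAt.eventually_lt_const (by simpa using hu)] with z hz
  exact ⟨u, hz⟩

lemma exists_gain_mul_add_mul_neg [ProperSpace E] (hproper : IsProper V) (hpos : IsPosDefFn V)
    (hV : Continuous V) {L M : E → U → ℝ} (hL : ∀ u, Continuous (L · u))
    (hM : ∀ u, Continuous (M · u)) (hneg : ∀ x ≠ 0, ∃ u, L x u < 0)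
    (hnear : ∀ᶠ z in 𝓝[≠] (0 : ℝ × E), ∃ u, L z.2 u + z.1 * M z.2 u < 0) :
    ∃ R > 0, ∃ κ : ℝ → ℝ, ContDiff ℝ (⊤ : ℕ∞) κ ∧ (∀ v, 1 ≤ κ v) ∧ κ 0 = 1 ∧
      ∀ q x, |q| ≤ R → (q, x) ≠ 0 → ∃ u, κ (V x) * L x u + q * M x u < 0 := by
  obtain ⟨R, hR, hball⟩ :=
    Metric.nhds_basis_closedBall.eventually_iff.1 (eventually_nhdsWithin_iff.1 hnear)
  obtain ⟨κ, hκ, hκ1, hκ0, hP⟩ := exists_contDiff_gain hproper hpos hV hR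
    (P := fun q x => ∃ u, L x u + q * M x u < 0)
    (by
      filter_upwards [Metric.closedBall_mem_nhds 0 hR] with x hx q hq h0
      exact hball (mem_closedBall_zero_iff.2 <| norm_prod_le_iff.2
        ⟨hq, mem_closedBall_zero_iff.1 hx⟩) h0)
    (fun K hK h0 => eventually_forall_exists_add_mul_neg hL hM hK fun x hx =>
      hneg x (ne_of_mem_of_not_mem hx h0))
  refine ⟨R, hR, κ, hκ, hκ1, hκ0, fun q x hq h0 => ?_⟩
  have hk : 0 < κ (V x) := one_pos.trans_le (hκ1 _)
  -- Dividing by `κ` turns the claim at `q` into the admissibility of `q / κ`.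
  obtain ⟨u, hu⟩ := hP (q / κ (V x)) x
    (by rwa [abs_div, abs_of_pos hk, div_mul_cancel₀ _ hk.ne'])
    (by simpa [hk.ne'] using h0)
  refine ⟨u, ?_⟩
  calc κ (V x) * L x u + q * M x u = κ (V x) * (L x u + q / κ (V x) * M x u) := by field_simp
    _ < 0 := mul_neg_of_pos_of_neg hk hu

end GainScheduling

section PseudoHuber

variable {R : ℝ}

/-- The pseudo-Huber function `e ↦ R² (√(1 + (e / R)²) - 1)`: it is `e² / 2` to second order at the
origin, while its derivative is bounded by `R`. -/
def pseudoHuber (R e : ℝ) : ℝ := R ^ 2 * (√(1 + (e / R) ^ 2) - 1)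

lemma contDiff_pseudoHuber : ContDiff ℝ (⊤ : ℕ∞) (pseudoHuber R) := by
  refine contDiff_const.mul (ContDiff.sub (ContDiff.sqrt ?_ fun e => ?_) contDiff_const)
  exacts [by fun_prop, by positivity]

lemma deriv_pseudoHuber (hR : R ≠ 0) :
    deriv (pseudoHuber R) = fun e => e / √(1 + (e / R) ^ 2) := by
  funext e
  have hinner : HasDerivAt (fun e : ℝ => 1 + (e / R) ^ 2) (2 * (e / R) * (1 / R)) e := by
    simpa using! (((hasDerivAt_id e).div_const R).pow 2).const_add 1
  have hpos : 0 < 1 + (e / R) ^ 2 := by positivity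
  have houter := ((hinner.sqrt hpos.ne').sub_const 1).const_mul (R ^ 2)
  exact houter.deriv.trans (by field_simp)

lemma hasDerivAt_deriv_pseudoHuber_zero (hR : R ≠ 0) :
    HasDerivAt (deriv (pseudoHuber R)) 1 0 := by
  have hcont : ContinuousAt (fun e : ℝ => (√(1 + (e / R) ^ 2))⁻¹) 0 :=
    ContinuousAt.inv₀ (by fun_prop) (by simp)
  have htend : Tendsto (fun e : ℝ => (√(1 + (e / R) ^ 2))⁻¹) (𝓝 0) (𝓝 1) := by
    simpa [ContinuousAt] using hcont
  rw [deriv_pseudoHuber hR, hasDerivAt_iff_tendsto_slope]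
  refine (htend.mono_left nhdsWithin_le_nhds).congr' ?_
  filter_upwards [self_mem_nhdsWithin] with e (he : e ≠ 0)
  rw [slope_def_field, zero_div, sub_zero, sub_zero, div_div_cancel_left' he]

lemma deriv_pseudoHuber_eq_zero (hR : R ≠ 0) {e : ℝ} : deriv (pseudoHuber R) e = 0 ↔ e = 0 := by
  have hsqrt : √(1 + (e / R) ^ 2) ≠ 0 := by positivity
  simp [deriv_pseudoHuber hR, hsqrt]

lemma abs_div_le_sqrt_one_add_sq (e : ℝ) : |e / R| ≤ √(1 + (e / R) ^ 2) :=
  Real.abs_le_sqrt (by linarith)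

lemma abs_deriv_pseudoHuber_le (hR : 0 < R) (e : ℝ) : |deriv (pseudoHuber R) e| ≤ R := by
  have hsqrt : 0 < √(1 + (e / R) ^ 2) := by positivity
  rw [deriv_pseudoHuber hR.ne', abs_div, abs_of_pos hsqrt, div_le_iff₀ hsqrt]
  calc |e| = R * |e / R| := by rw [abs_div, abs_of_pos hR, mul_div_cancel₀ _ hR.ne']
    _ ≤ R * √(1 + (e / R) ^ 2) := by gcongr; exact abs_div_le_sqrt_one_add_sq e

lemma isPosDefFn_pseudoHuber (hR : R ≠ 0) : IsPosDefFn (pseudoHuber R) := by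
  refine ⟨by simp [pseudoHuber], fun e he => mul_pos (by positivity) (sub_pos.2 ?_)⟩
  have : 0 < (e / R) ^ 2 := by positivity
  exact Real.lt_sqrt_of_sq_lt (by linarith)

lemma isProper_pseudoHuber (hR : 0 < R) : IsProper (pseudoHuber R) := by
  have hlower (e : ℝ) : R * ‖e‖ - R ^ 2 ≤ pseudoHuber R e := by
    calc R * ‖e‖ - R ^ 2 = R ^ 2 * (|e / R| - 1) := by
          rw [abs_div, abs_of_pos hR, Real.norm_eq_abs]; field_simp
      _ ≤ pseudoHuber R e := by unfold pseudoHuber; gcongr; exact abs_div_le_sqrt_one_add_sq e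
  exact tendsto_atTop_mono hlower <|
    tendsto_atTop_add_const_right _ _ (tendsto_norm_cobounded_atTop.const_mul_atTop hR)

end PseudoHuber

section CompositeLyapunov

variable {E G : Type*} [NormedAddCommGroup E] [NormedAddCommGroup G] {V : E → ℝ} {κ : ℝ → ℝ}

lemma IsPosDefFn.add_prod {Q : G → ℝ} (hV : IsPosDefFn V) (hQ : IsPosDefFn Q) :
    IsPosDefFn fun z : G × E => V z.2 + Q z.1 := by
  refine ⟨by simp [hV.1, hQ.1], fun ⟨q, x⟩ hz => ?_⟩
  by_cases hx : x = 0
  · exact add_pos_of_nonneg_of_pos (hV.nonneg x) (hQ.2 q fun hq => hz (by simp [hq, hx]))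
  · exact add_pos_of_pos_of_nonneg (hV.2 x hx) (hQ.nonneg q)

lemma IsProper.add_prod {Q : G → ℝ} (hV : IsProper V) (hV0 : ∀ x, 0 ≤ V x) (hQ : IsProper Q)
    (hQ0 : ∀ q, 0 ≤ Q q) : IsProper fun z : G × E => V z.2 + Q z.1 := by
  rw [IsProper, Bornology.cobounded_prod, Filter.coprod, tendsto_sup]
  constructor
  · exact tendsto_atTop_mono (fun z => le_add_of_nonneg_left (hV0 z.2))
      (Tendsto.comp hQ tendsto_comap)
  · exact tendsto_atTop_mono (fun z => le_add_of_nonneg_right (hQ0 z.1))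
      (Tendsto.comp hV tendsto_comap)

lemma le_integral_of_one_le (hκ : Continuous κ) (hκ1 : ∀ v, 1 ≤ κ v) {v : ℝ} (hv : 0 ≤ v) :
    v ≤ ∫ s in (0 : ℝ)..v, κ s := by
  calc v = ∫ _ in (0 : ℝ)..v, (1 : ℝ) := by simp
    _ ≤ ∫ s in (0 : ℝ)..v, κ s := intervalIntegral.integral_mono hv
      (continuous_const.intervalIntegrable _ _) (hκ.intervalIntegrable _ _) hκ1

lemma IsPosDefFn.integral_comp (hV : IsPosDefFn V) (hκ : Continuous κ) (hκ1 : ∀ v, 1 ≤ κ v) :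
    IsPosDefFn fun x => ∫ s in (0 : ℝ)..V x, κ s :=
  ⟨by simp [hV.1], fun x hx =>
    (hV.2 x hx).trans_le (le_integral_of_one_le hκ hκ1 (hV.nonneg x))⟩

lemma IsProper.integral_comp (hV : IsProper V) (hV0 : ∀ x, 0 ≤ V x) (hκ : Continuous κ)
    (hκ1 : ∀ v, 1 ≤ κ v) : IsProper fun x => ∫ s in (0 : ℝ)..V x, κ s :=
  tendsto_atTop_mono (fun x => le_integral_of_one_le hκ hκ1 (hV0 x)) hV

lemma contDiff_one_integral (hκ : Continuous κ) : ContDiff ℝ 1 fun v => ∫ s in (0 : ℝ)..v, κ s := by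
  have hderiv (v : ℝ) := hκ.integral_hasStrictDerivAt 0 v
  refine contDiff_one_iff_deriv.2 ⟨fun v => (hderiv v).hasDerivAt.differentiableAt, ?_⟩
  rwa [funext fun v => (hderiv v).hasDerivAt.deriv]

end CompositeLyapunov

section Forwarding

variable {E U : Type*} [NormedAddCommGroup E] [NormedSpace ℝ E]
  [NormedAddCommGroup U] [NormedSpace ℝ U]
  {V : E → ℝ} {κ σ : ℝ → ℝ} {φ : E → ℝ × E} {γ : E → U →L[ℝ] ℝ × E} {k : ℝ × E →L[ℝ] U}

/-- The differential `κ(V x) dV + σ(q) dq` at `(q, x)` of a composite Lyapunov function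
`l(V x) + ψ(q)` with `l' = κ` and `ψ' = σ`. -/
def forwardingForm (κ σ : ℝ → ℝ) (V : E → ℝ) (z : ℝ × E) : ℝ × E →L[ℝ] ℝ :=
  κ (V z.2) • (fderiv ℝ V z.2 ∘L .snd ℝ ℝ E) + σ z.1 • .fst ℝ ℝ E

lemma forwardingForm_apply (z w : ℝ × E) :
    forwardingForm κ σ V z w = κ (V z.2) * fderiv ℝ V z.2 w.2 + σ z.1 * w.1 :=
  rfl

lemma forwardingForm_zero (hV : IsPosDefFn V) (hσ : σ 0 = 0) : forwardingForm κ σ V 0 = 0 := by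
  ext <;> simp [forwardingForm, hV.fderiv_zero, hσ]

lemma hasFDerivAt_forwardingForm_zero (hV : IsPosDefFn V) (hV2 : ContDiff ℝ 2 V)
    (hκ : DifferentiableAt ℝ κ 0) (hκ0 : κ 0 = 1) (hσ : HasDerivAt σ 1 0) :
    HasFDerivAt (forwardingForm κ σ V)
      (.precomp ℝ (.snd ℝ ℝ E) ∘L fderiv ℝ (fderiv ℝ V) 0 ∘L .snd ℝ ℝ E +
        (ContinuousLinearMap.fst ℝ ℝ E).smulRight (.fst ℝ ℝ E)) 0 := by
  have hd2V : HasFDerivAt (fderiv ℝ V) (fderiv ℝ (fderiv ℝ V) 0) 0 :=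
    ((hV2.fderiv_right (m := 1) le_rfl).differentiable one_ne_zero 0).hasFDerivAt
  have hdV : HasFDerivAt (fun z : ℝ × E => fderiv ℝ V z.2 ∘L .snd ℝ ℝ E)
      (.precomp ℝ (.snd ℝ ℝ E) ∘L fderiv ℝ (fderiv ℝ V) 0 ∘L .snd ℝ ℝ E) 0 :=
    HasFDerivAt.comp (g := ContinuousLinearMap.precomp ℝ (.snd ℝ ℝ E)) (0 : ℝ × E)
      (ContinuousLinearMap.hasFDerivAt _)
      (HasFDerivAt.comp (g := fderiv ℝ V) (0 : ℝ × E) hd2V hasFDerivAt_snd)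
  have hκV : DifferentiableAt ℝ (fun z : ℝ × E => κ (V z.2)) 0 :=
    DifferentiableAt.comp (g := κ) (f := fun z : ℝ × E => V z.2) 0 (by simpa [hV.1] using hκ)
      (((hV2.differentiable two_ne_zero).comp differentiable_snd) 0)
  have hσq : HasFDerivAt (fun z : ℝ × E => σ z.1) (.fst ℝ ℝ E) 0 := by
    simpa using! HasDerivAt.comp_hasFDerivAt (h₂ := σ) (f := Prod.fst) (0 : ℝ × E) hσ
      hasFDerivAt_fst
  refine ((hκV.hasFDerivAt.smul hdV).add (hσq.smul_const (.fst ℝ ℝ E))).congr_fderiv ?_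
  ext <;> simp [hV.1, hκ0, hV.fderiv_zero]

/-- The linearization at the origin of the vector field `z ↦ φ z.2 + γ z.2 (k z)` when
`φ 0 = 0`. -/
def forwardingLinearization (φ : E → ℝ × E) (γ : E → U →L[ℝ] ℝ × E) (k : ℝ × E →L[ℝ] U) :
    ℝ × E →L[ℝ] ℝ × E :=
  fderiv ℝ φ 0 ∘L .snd ℝ ℝ E + γ 0 ∘L k

lemma hasFDerivAt_forwardingLinearization (hφ : DifferentiableAt ℝ φ 0)
    (hγ : DifferentiableAt ℝ γ 0) :
    HasFDerivAt (fun z : ℝ × E => φ z.2 + γ z.2 (k z)) (forwardingLinearization φ γ k) 0 := by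
  have hφ' : HasFDerivAt (fun z : ℝ × E => φ z.2) (fderiv ℝ φ 0 ∘L .snd ℝ ℝ E) 0 :=
    HasFDerivAt.comp (g := φ) (0 : ℝ × E) hφ.hasFDerivAt hasFDerivAt_snd
  have hγ' : DifferentiableAt ℝ (fun z : ℝ × E => γ z.2) 0 :=
    DifferentiableAt.comp (g := γ) (0 : ℝ × E) hγ differentiableAt_snd
  refine (hφ'.add (hγ'.hasFDerivAt.clm_apply k.hasFDerivAt)).congr_fderiv ?_
  ext <;> simp [forwardingLinearization]

lemma eventually_forwardingForm_neg [FiniteDimensional ℝ E] (hV : IsPosDefFn V)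
    (hV2 : ContDiff ℝ 2 V) (hφ : DifferentiableAt ℝ φ 0) (hφ0 : φ 0 = 0)
    (hγ : DifferentiableAt ℝ γ 0)
    (hneg : ∀ z ≠ 0, fderiv ℝ (fderiv ℝ V) 0 z.2 (forwardingLinearization φ γ k z).2 +
      z.1 * (forwardingLinearization φ γ k z).1 < 0)
    (hκ : DifferentiableAt ℝ κ 0) (hκ0 : κ 0 = 1) (hσ : HasDerivAt σ 1 0) (hσ0 : σ 0 = 0) :
    ∀ᶠ z in 𝓝[≠] 0, forwardingForm κ σ V z (φ z.2 + γ z.2 (k z)) < 0 :=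
  eventually_clm_apply_neg (hasFDerivAt_forwardingForm_zero hV hV2 hκ hκ0 hσ)
    (forwardingForm_zero hV hσ0) (hasFDerivAt_forwardingLinearization hφ hγ) (by simp [hφ0]) hneg

lemma hasFDerivAt_integral_add {ψ : ℝ → ℝ} (hV : Differentiable ℝ V) (hκ : Continuous κ)
    (hψ : Differentiable ℝ ψ) (z : ℝ × E) :
    HasFDerivAt (fun z : ℝ × E => (∫ s in (0 : ℝ)..V z.2, κ s) + ψ z.1)
      (forwardingForm κ (deriv ψ) V z) z := by
  have hVx : HasFDerivAt (fun z : ℝ × E => V z.2) (fderiv ℝ V z.2 ∘L .snd ℝ ℝ E) z :=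
    HasFDerivAt.comp (g := V) z (hV z.2).hasFDerivAt hasFDerivAt_snd
  have hint := (hκ.integral_hasStrictDerivAt 0 (V z.2)).hasDerivAt.comp_hasFDerivAt z hVx
  exact hint.add <| HasDerivAt.comp_hasFDerivAt (h₂ := ψ) (f := Prod.fst) z
    (hψ z.1).hasDerivAt hasFDerivAt_fst

lemma exists_gain_forwardingForm_neg [FiniteDimensional ℝ E]
    (hV : IsControlLyapunov (fun x => (φ x).2) (fun x => .snd ℝ ℝ E ∘L γ x) V)
    (hV2 : ContDiff ℝ 2 V) (hφ : ContDiff ℝ 1 φ) (hφ0 : φ 0 = 0) (hγ : ContDiff ℝ 1 γ)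
    (hneg : ∀ z ≠ 0, fderiv ℝ (fderiv ℝ V) 0 z.2 (forwardingLinearization φ γ k z).2 +
      z.1 * (forwardingLinearization φ γ k z).1 < 0) :
    ∃ R > 0, ∃ κ : ℝ → ℝ, ContDiff ℝ (⊤ : ℕ∞) κ ∧ (∀ v, 1 ≤ κ v) ∧ κ 0 = 1 ∧
      ∀ σ : ℝ → ℝ, (∀ q, |σ q| ≤ R) → (∀ q, σ q = 0 → q = 0) →
        ∀ z ≠ 0, ∃ u, forwardingForm κ σ V z (φ z.2 + γ z.2 u) < 0 := by
  have : ProperSpace E := FiniteDimensional.proper_real E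
  have hdV : Continuous (fderiv ℝ V) := hV.contDiff.continuous_fderiv one_ne_zero
  have hφc := hφ.continuous
  have hγc := hγ.continuous
  have hnear := eventually_forwardingForm_neg (κ := fun _ => 1) (σ := id) hV.isPosDefFn hV2
    (hφ.differentiable one_ne_zero 0) hφ0 (hγ.differentiable one_ne_zero 0) hneg
    (differentiableAt_const 1) rfl (hasDerivAt_id 0) rfl
  obtain ⟨R, hR, κ, hκ, hκ1, hκ0, hκneg⟩ := exists_gain_mul_add_mul_neg hV.isProper hV.isPosDefFn
    (L := fun x u => fderiv ℝ V x ((φ x).2 + (γ x u).2)) (M := fun x u => (φ x).1 + (γ x u).1)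
    hV.contDiff.continuous (fun u => by fun_prop) (fun u => by fun_prop) hV.exists_neg
    (hnear.mono fun z hz => ⟨k z, by simpa [forwardingForm_apply] using hz⟩)
  refine ⟨R, hR, κ, hκ, hκ1, hκ0, fun σ hσ hσ0 z hz => ?_⟩
  refine hκneg (σ z.1) z.2 (hσ z.1) fun h => hz ?_
  rw [Prod.mk_eq_zero] at h
  exact Prod.ext (hσ0 _ h.1) h.2

theorem exists_isControlLyapunov_forwarding [FiniteDimensional ℝ E]
    (hV : IsControlLyapunov (fun x => (φ x).2) (fun x => .snd ℝ ℝ E ∘L γ x) V)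
    (hV2 : ContDiff ℝ 2 V) (hφ : ContDiff ℝ 1 φ) (hφ0 : φ 0 = 0) (hγ : ContDiff ℝ 1 γ)
    (hneg : ∀ z ≠ 0, fderiv ℝ (fderiv ℝ V) 0 z.2 (forwardingLinearization φ γ k z).2 +
      z.1 * (forwardingLinearization φ γ k z).1 < 0) :
    ∃ W, IsControlLyapunov (fun z : ℝ × E => φ z.2) (fun z => γ z.2) W ∧
      ∀ᶠ z in 𝓝[≠] 0, fderiv ℝ W z (φ z.2 + γ z.2 (k z)) < 0 := by
  obtain ⟨R, hR, κ, hκ, hκ1, hκ0, hκneg⟩ :=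
    exists_gain_forwardingForm_neg hV hV2 hφ hφ0 hγ hneg
  let W (z : ℝ × E) : ℝ := (∫ s in (0 : ℝ)..V z.2, κ s) + pseudoHuber R z.1
  have hfderiv (z) : fderiv ℝ W z = forwardingForm κ (deriv (pseudoHuber R)) V z :=
    (hasFDerivAt_integral_add (hV2.differentiable two_ne_zero) hκ.continuous
      (contDiff_pseudoHuber.differentiable (by simp)) z).fderiv
  have hV0 := hV.isPosDefFn.nonneg
  have hint0 := hV.isPosDefFn.integral_comp hκ.continuous hκ1
  have hψ := isPosDefFn_pseudoHuber hR.ne'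
  refine ⟨W, ⟨?_, ?_, hint0.add_prod hψ, fun z hz => ?_⟩, ?_⟩
  · exact ((contDiff_one_integral hκ.continuous).comp (hV.contDiff.comp contDiff_snd)).add
      ((contDiff_pseudoHuber.of_le (by simp)).comp contDiff_fst)
  · exact (hV.isProper.integral_comp hV0 hκ.continuous hκ1).add_prod hint0.nonneg
      (isProper_pseudoHuber hR) hψ.nonneg
  · rw [hfderiv]
    exact hκneg _ (abs_deriv_pseudoHuber_le hR) (fun q => (deriv_pseudoHuber_eq_zero hR.ne').1) z hz
  · simp only [hfderiv]
    exact eventually_forwardingForm_neg hV.isPosDefFn hV2 (hφ.differentiable one_ne_zero 0) hφ0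
      (hγ.differentiable one_ne_zero 0) hneg (hκ.differentiable (by simp) 0) hκ0
      (hasDerivAt_deriv_pseudoHuber_zero hR.ne') ((deriv_pseudoHuber_eq_zero hR.ne').2 rfl)

/-- The change of coordinates `(y, x) ↦ (y - ℓ x, x)`. -/
def shear (ℓ : E →L[ℝ] ℝ) : (ℝ × E) ≃L[ℝ] ℝ × E :=
  .equivOfInverse ((.fst ℝ ℝ E - ℓ ∘L .snd ℝ ℝ E).prod (.snd ℝ ℝ E))
    ((.fst ℝ ℝ E + ℓ ∘L .snd ℝ ℝ E).prod (.snd ℝ ℝ E))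
    (fun z => by simp) (fun z => by simp)

@[simp]
lemma shear_apply_fst (ℓ : E →L[ℝ] ℝ) (z : ℝ × E) : (shear ℓ z).1 = z.1 - ℓ z.2 :=
  rfl

@[simp]
lemma shear_apply_snd (ℓ : E →L[ℝ] ℝ) (z : ℝ × E) : (shear ℓ z).2 = z.2 :=
  rfl

lemma forwardingLinearization_shear (ℓ : E →L[ℝ] ℝ) (z : ℝ × E) :
    forwardingLinearization (shear ℓ ∘ φ) (fun x => (shear ℓ : ℝ × E →L[ℝ] ℝ × E) ∘L γ x)
      (k ∘L ((shear ℓ).symm : ℝ × E →L[ℝ] ℝ × E)) (shear ℓ z) =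
        shear ℓ (forwardingLinearization φ γ k z) := by
  simp [forwardingLinearization, (shear ℓ).comp_fderiv]

lemma IsControlLyapunov.of_shear (ℓ : E →L[ℝ] ℝ) {W : ℝ × E → ℝ}
    (hW : IsControlLyapunov (fun z : ℝ × E => shear ℓ (φ z.2))
      (fun z => (shear ℓ : ℝ × E →L[ℝ] ℝ × E) ∘L γ z.2) W) :
    IsControlLyapunov (fun z : ℝ × E => φ z.2) (fun z => γ z.2) (W ∘ shear ℓ) := by
  simpa [← ContinuousLinearMap.comp_assoc] using hW.comp_equiv (shear ℓ)

theorem exists_feedback_isGAS_forwarding [FiniteDimensional ℝ E] (ℓ : E →L[ℝ] ℝ)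
    (hV : IsControlLyapunov (fun x => (φ x).2) (fun x => .snd ℝ ℝ E ∘L γ x) V)
    (hV2 : ContDiff ℝ 2 V) (hφ : ContDiff ℝ 1 φ) (hφ0 : φ 0 = 0) (hγ : ContDiff ℝ 1 γ)
    (hneg : ∀ z ≠ 0, fderiv ℝ (fderiv ℝ V) 0 z.2 (forwardingLinearization φ γ k z).2 +
      (shear ℓ z).1 * (shear ℓ (forwardingLinearization φ γ k z)).1 < 0) :
    ∃ α : ℝ × E → U, ContDiff ℝ (⊤ : ℕ∞) α ∧ α =ᶠ[𝓝 0] k ∧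
      IsGAS fun z : ℝ × E => φ z.2 + γ z.2 (α z) := by
  obtain ⟨W, hW, hWneg⟩ := exists_isControlLyapunov_forwarding (φ := shear ℓ ∘ φ)
    (γ := fun x => (shear ℓ : ℝ × E →L[ℝ] ℝ × E) ∘L γ x)
    (k := k ∘L ((shear ℓ).symm : ℝ × E →L[ℝ] ℝ × E)) hV hV2 ((shear ℓ).contDiff.comp hφ)
    (by simp [hφ0]) (contDiff_const.clm_comp hγ) fun z hz => by
      obtain ⟨z, rfl⟩ := (shear ℓ).surjective z
      rw [forwardingLinearization_shear]
      exact hneg z fun h => hz (by simp [h])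
  have htend : Tendsto (shear ℓ) (𝓝[≠] 0) (𝓝[≠] 0) :=
    tendsto_nhdsWithin_of_tendsto_nhds_of_eventually_within _
      (((shear ℓ).continuous.tendsto' 0 0 (map_zero _)).mono_left nhdsWithin_le_nhds)
      (eventually_mem_nhdsWithin.mono fun z hz => by simpa using hz)
  refine (IsControlLyapunov.of_shear ℓ hW).exists_feedback_isGAS (hφ.comp contDiff_snd)
    (hγ.comp contDiff_snd) k.contDiff ?_
  refine (htend.eventually hWneg).mono fun z hz => ?_
  simpa [(shear ℓ).comp_right_fderiv] using hz

end Forwarding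

section SpectralRadius

variable {A : Type*} [NormedRing A] [NormedAlgebra ℂ A] [CompleteSpace A]

lemma exists_ne_zero_norm_pow_lt_one [Nontrivial A] {a : A}
    (ha : ∀ μ ∈ spectrum ℂ a, ‖μ‖ < 1) : ∃ m ≠ 0, ‖a ^ m‖ < 1 := by
  have hradius : spectralRadius ℂ a < 1 := by
    simpa using spectrum.spectralRadius_lt_of_forall_lt a (r := 1) fun μ hμ => by
      simpa [← NNReal.coe_lt_coe] using ha μ hμ
  have hroot := spectrum.pow_nnnorm_pow_one_div_tendsto_nhds_spectralRadius a
  obtain ⟨m, hm, hm0⟩ :=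
    ((hroot.eventually_lt_const hradius).and (eventually_ne_atTop 0)).exists
  refine ⟨m, hm0, lt_of_not_ge fun hge => hm.not_ge ?_⟩
  have hge' : (1 : ENNReal) ≤ ‖a ^ m‖₊ := by
    rw [ENNReal.one_le_coe_iff]
    exact_mod_cast hge
  exact ENNReal.one_le_rpow hge' (by positivity)

lemma exists_pos_forall_norm_one_add_mul_lt_one {S : Set ℂ} (hS : IsCompact S)
    (hre : ∀ μ ∈ S, μ.re < 0) : ∃ ε : ℝ, 0 < ε ∧ ∀ μ ∈ S, ‖1 + ε * μ‖ < 1 := by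
  have hnear : ∀ᶠ ε : ℝ in 𝓝 0, ∀ μ ∈ S, 2 * μ.re + ε * Complex.normSq μ < 0 := by
    refine hS.eventually_forall_of_forall_eventually fun μ hμ => ?_
    have hcont : Continuous fun z : ℝ × ℂ => 2 * z.2.re + z.1 * Complex.normSq z.2 := by
      have := Complex.continuous_normSq
      fun_prop
    refine hcont.continuousAt.eventually_lt_const ?_
    simp only [zero_mul, add_zero]
    linarith [hre μ hμ]
  obtain ⟨ε, hε, hε0⟩ := ((hnear.filter_mono nhdsWithin_le_nhds).and
    (self_mem_nhdsWithin (s := Set.Ioi 0))).exists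
  refine ⟨ε, hε0, fun μ hμ => ?_⟩
  have hsq : ‖1 + ε * μ‖ ^ 2 = 1 + ε * (2 * μ.re + ε * Complex.normSq μ) := by
    rw [← Complex.normSq_eq_norm_sq, Complex.normSq_apply, Complex.normSq_apply]
    simp only [Complex.add_re, Complex.add_im, Complex.one_re, Complex.one_im,
      Complex.re_ofReal_mul, Complex.im_ofReal_mul]
    ring
  rw [← sq_lt_one_iff₀ (norm_nonneg _), hsq]
  linarith [mul_neg_of_pos_of_neg hε0 (hε μ hμ)]

lemma exists_pos_norm_one_add_smul_pow_lt_one [Nontrivial A] {a : A}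
    (ha : ∀ μ ∈ spectrum ℂ a, μ.re < 0) :
    ∃ ε : ℝ, 0 < ε ∧ ∃ m ≠ 0, ‖(1 + (ε : ℂ) • a) ^ m‖ < 1 := by
  obtain ⟨ε, hε, hnorm⟩ := exists_pos_forall_norm_one_add_mul_lt_one (spectrum.isCompact a) ha
  refine ⟨ε, hε, exists_ne_zero_norm_pow_lt_one fun ν hν => ?_⟩
  rw [← map_one (algebraMap ℂ A), ← spectrum.singleton_add_eq,
    spectrum.smul_eq_smul _ _ (spectrum.nonempty a)] at hν
  obtain ⟨_, rfl, _, ⟨μ, hμ, rfl⟩, rfl⟩ := hν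
  exact hnorm μ hμ

end SpectralRadius

section LyapunovEquation

variable {ι : Type*} [Fintype ι] [DecidableEq ι]

/-- The partial sum `∑ (Cᵏ)ᵀ Cᵏ`, `k < m`, of the series solving the discrete Lyapunov (Stein)
equation `P - Cᵀ P C = 1`. -/
def steinSum (C : Matrix ι ι ℝ) (m : ℕ) : Matrix ι ι ℝ :=
  ∑ k ∈ Finset.range m, (C ^ k)ᵀ * C ^ k

lemma steinSum_sub (C : Matrix ι ι ℝ) (m : ℕ) :
    steinSum C m - Cᵀ * steinSum C m * C = 1 - (C ^ m)ᵀ * C ^ m := by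
  have hshift (k : ℕ) : Cᵀ * ((C ^ k)ᵀ * C ^ k) * C = (C ^ (k + 1))ᵀ * C ^ (k + 1) := by
    rw [pow_succ, transpose_mul]
    simp only [Matrix.mul_assoc]
  have htelescope := Finset.sum_range_sub' (fun k => (C ^ k)ᵀ * C ^ k) m
  rw [steinSum, Finset.mul_sum, Finset.sum_mul]
  simp only [hshift]
  rw [← Finset.sum_sub_distrib, htelescope, pow_zero, transpose_one, one_mul]

lemma posDef_steinSum (C : Matrix ι ι ℝ) {m : ℕ} (hm : m ≠ 0) : (steinSum C m).PosDef := by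
  obtain ⟨m, rfl⟩ := Nat.exists_eq_succ_of_ne_zero hm
  have htail : (∑ k ∈ Finset.range m, (C ^ (k + 1))ᵀ * C ^ (k + 1)).PosSemidef :=
    Matrix.posSemidef_sum _ fun k _ => Matrix.posSemidef_conjTranspose_mul_self _
  rw [steinSum, Finset.sum_range_succ']
  simpa using Matrix.PosDef.posSemidef_add htail Matrix.PosDef.one

open scoped Matrix.Norms.L2Operator in
lemma posDef_one_sub_transpose_mul_self {M : Matrix ι ι ℝ}
    (hM : ‖M.map (algebraMap ℝ ℂ)‖ < 1) : (1 - Mᵀ * M).PosDef := by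
  let toC (v : ι → ℝ) : EuclideanSpace ℂ ι := WithLp.toLp 2 fun i => (v i : ℂ)
  have hnorm (v : ι → ℝ) : ‖toC v‖ ^ 2 = v ⬝ᵥ v := by
    rw [EuclideanSpace.norm_sq_eq]
    simp [toC, dotProduct, sq]
  refine Matrix.PosDef.of_dotProduct_mulVec_pos
    (by simp [IsHermitian, conjTranspose_eq_transpose_of_trivial]) fun v hv => ?_
  have hpos : 0 < ‖toC v‖ := norm_pos_iff.2 fun h => hv <| funext fun i => by
    simpa [toC] using congrArg (· i) h
  have hle : ‖toC (M *ᵥ v)‖ ≤ ‖M.map (algebraMap ℝ ℂ)‖ * ‖toC v‖ := by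
    have hmap : M.map (algebraMap ℝ ℂ) *ᵥ (toC v).ofLp = (toC (M *ᵥ v)).ofLp := by
      ext i
      simp [toC, mulVec, dotProduct]
    have hop := Matrix.l2_opNorm_mulVec (M.map (algebraMap ℝ ℂ)) (toC v)
    rwa [hmap] at hop
  have hlt : ‖toC (M *ᵥ v)‖ < ‖toC v‖ :=
    hle.trans_lt (mul_lt_of_lt_one_left hpos hM)
  have hsq : (M *ᵥ v) ⬝ᵥ (M *ᵥ v) < v ⬝ᵥ v := by
    rw [← hnorm, ← hnorm]
    gcongr
  have hexpand : v ⬝ᵥ ((1 - Mᵀ * M) *ᵥ v) = v ⬝ᵥ v - (M *ᵥ v) ⬝ᵥ (M *ᵥ v) := by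
    rw [sub_mulVec, one_mulVec, dotProduct_sub, ← mulVec_mulVec, dotProduct_mulVec _ Mᵀ,
      vecMul_transpose]
  rw [star_trivial, hexpand]
  exact sub_pos.2 hsq

open scoped Matrix.Norms.L2Operator in
theorem Hurwitz.exists_lyapunov [Nonempty ι] {N : Matrix ι ι ℝ} (hN : Hurwitz N) :
    ∃ P : Matrix ι ι ℝ, P.PosDef ∧ (-(P * N + Nᵀ * P)).PosDef := by
  obtain ⟨ε, hε, m, hm, hnorm⟩ := exists_pos_norm_one_add_smul_pow_lt_one hN
  let C : Matrix ι ι ℝ := 1 + ε • N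
  have hC : (1 + (ε : ℂ) • N.map (algebraMap ℝ ℂ)) ^ m = (C ^ m).map (algebraMap ℝ ℂ) := by
    have hmap : 1 + (ε : ℂ) • N.map (algebraMap ℝ ℂ) = (algebraMap ℝ ℂ).mapMatrix C := by
      ext i j
      simp [C, one_apply, apply_ite]
    rw [hmap, ← map_pow, RingHom.mapMatrix_apply]
  have hP := posDef_steinSum C hm
  set P := steinSum C m
  refine ⟨P, hP, ?_⟩
  have hstep : (P - Cᵀ * P * C).PosDef := by
    rw [steinSum_sub]
    exact posDef_one_sub_transpose_mul_self (hC ▸ hnorm)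
  have hsemidef : (Nᵀ * P * N).PosSemidef := hP.posSemidef.conjTranspose_mul_mul_same N
  have hexpand : -(P * N + Nᵀ * P) = ε⁻¹ • (P - Cᵀ * P * C) + ε • (Nᵀ * P * N) := by
    have : P - Cᵀ * P * C = -(ε • (P * N + Nᵀ * P) + (ε * ε) • (Nᵀ * P * N)) := by
      simp only [C, transpose_add, transpose_one, transpose_smul, add_mul, mul_add, one_mul,
        mul_one, Algebra.smul_mul_assoc, Algebra.mul_smul_comm, smul_add, smul_smul, neg_add_rev]
      abel
    rw [this, smul_neg, smul_add, smul_smul, smul_smul, ← mul_assoc, inv_mul_cancel₀ hε.ne']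
    simp
  rw [hexpand]
  exact (hstep.smul (inv_pos.2 hε)).add_posSemidef (hsemidef.smul hε.le)

end LyapunovEquation

section SchurComplement

variable {ι : Type*} [Fintype ι]

lemma posDef_neg_lyapunov_iff {P S : Matrix ι ι ℝ} (hP : P.IsHermitian) :
    (-(P * S + Sᵀ * P)).PosDef ↔ ∀ x ≠ 0, x ⬝ᵥ (P *ᵥ (S *ᵥ x)) < 0 := by
  have hPT : Pᵀ = P := by rwa [← conjTranspose_eq_transpose_of_trivial]
  have hherm : (-(P * S + Sᵀ * P)).IsHermitian := by
    simp [IsHermitian, conjTranspose_eq_transpose_of_trivial, hPT, add_comm]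
  have hquad (x : ι → ℝ) :
      x ⬝ᵥ (-(P * S + Sᵀ * P) *ᵥ x) = -(2 * (x ⬝ᵥ (P *ᵥ (S *ᵥ x)))) := by
    have hadj : x ⬝ᵥ ((Sᵀ * P) *ᵥ x) = x ⬝ᵥ ((P * S) *ᵥ x) := by
      rw [← dotProduct_transpose_mulVec, transpose_mul, transpose_transpose, hPT]
    rw [neg_mulVec, add_mulVec, dotProduct_neg, dotProduct_add, hadj, ← mulVec_mulVec, two_mul]
  rw [posDef_iff_dotProduct_mulVec]
  simp only [hherm, true_and, star_trivial, hquad]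
  exact forall₂_congr fun x _ => ⟨fun h => by linarith, fun h => by linarith⟩

variable [DecidableEq ι]

/-- The matrix of the embedding `x ↦ (m ⬝ᵥ x, x)` of `ℝ^ι` as a graph over its last coordinates. -/
def graphMatrix (m : ι → ℝ) : Matrix (Fin 1 ⊕ ι) ι ℝ :=
  fromRows (of fun _ => m) 1

lemma graphMatrix_mulVec (m x : ι → ℝ) :
    graphMatrix m *ᵥ x = Sum.elim (fun _ => m ⬝ᵥ x) x := by
  rw [graphMatrix, fromRows_mulVec, one_mulVec]
  rfl

lemma graphMatrix_mulVec_injective (m : ι → ℝ) : Function.Injective (graphMatrix m).mulVec :=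
  fun x x' h => by
    simpa [graphMatrix_mulVec] using congrArg (· ∘ Sum.inr) h

lemma eq_smul_single_add_graphMatrix_mulVec (m : ι → ℝ) (v : Fin 1 ⊕ ι → ℝ) :
    v = (v (.inl 0) - m ⬝ᵥ (v ∘ .inr)) • Pi.single (.inl 0) 1 +
      graphMatrix m *ᵥ (v ∘ .inr) := by
  rw [graphMatrix_mulVec]
  ext i
  rcases i with i | i
  · simp [Subsingleton.elim i 0]
  · simp

lemma graphMatrix_mulVec_dotProduct_mulVec_single {P : Matrix (Fin 1 ⊕ ι) (Fin 1 ⊕ ι) ℝ}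
    {m : ι → ℝ} (hm : ∀ j, m j * P (.inl 0) (.inl 0) = -P (.inr j) (.inl 0)) (x : ι → ℝ) :
    (graphMatrix m *ᵥ x) ⬝ᵥ (P *ᵥ Pi.single (.inl 0) 1) = 0 := by
  rw [mulVec_single_one, graphMatrix_mulVec]
  simp only [dotProduct, Fintype.sum_sum_type, Finset.univ_unique, Fin.default_eq_zero,
    Finset.sum_singleton, Sum.elim_inl, Sum.elim_inr, col_apply, Finset.sum_mul]
  rw [← Finset.sum_add_distrib]
  exact Finset.sum_eq_zero fun j _ => by rw [mul_right_comm, hm]; ring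

lemma exists_dotProduct_mulVec_eq_add_graphMatrix
    {P : Matrix (Fin 1 ⊕ ι) (Fin 1 ⊕ ι) ℝ} (hP : P.PosDef) :
    ∃ m : ι → ℝ, ∀ v w, v ⬝ᵥ (P *ᵥ w) =
      P (.inl 0) (.inl 0) *
        ((v (.inl 0) - m ⬝ᵥ (v ∘ .inr)) * (w (.inl 0) - m ⬝ᵥ (w ∘ .inr))) +
      (v ∘ .inr) ⬝ᵥ (((graphMatrix m)ᵀ * P * graphMatrix m) *ᵥ (w ∘ .inr)) := by
  let e : Fin 1 ⊕ ι → ℝ := Pi.single (.inl 0) 1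
  let m : ι → ℝ := fun j => -(P (.inr j) (.inl 0) / P (.inl 0) (.inl 0))
  have ha : P (.inl 0) (.inl 0) ≠ 0 := hP.diag_pos.ne'
  have hsymm (v w : Fin 1 ⊕ ι → ℝ) : v ⬝ᵥ (P *ᵥ w) = w ⬝ᵥ (P *ᵥ v) := by
    rw [← dotProduct_transpose_mulVec, ← conjTranspose_eq_transpose_of_trivial, hP.isHermitian.eq]
  have horth (x : ι → ℝ) : (graphMatrix m *ᵥ x) ⬝ᵥ (P *ᵥ e) = 0 :=
    graphMatrix_mulVec_dotProduct_mulVec_single (fun j => by simp only [m]; field_simp) x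
  have horth' (x : ι → ℝ) : e ⬝ᵥ (P *ᵥ (graphMatrix m *ᵥ x)) = 0 := by
    rw [hsymm, horth]
  have hdiag : e ⬝ᵥ (P *ᵥ e) = P (.inl 0) (.inl 0) := by
    rw [mulVec_single_one, single_one_dotProduct, col_apply]
  have hgraph (x x' : ι → ℝ) : (graphMatrix m *ᵥ x) ⬝ᵥ (P *ᵥ (graphMatrix m *ᵥ x')) =
      x ⬝ᵥ (((graphMatrix m)ᵀ * P * graphMatrix m) *ᵥ x') := by
    rw [Matrix.mul_assoc, ← mulVec_mulVec, ← mulVec_mulVec, dotProduct_transpose_mulVec,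
      dotProduct_comm]
  refine ⟨m, fun v w => ?_⟩
  conv_lhs => rw [eq_smul_single_add_graphMatrix_mulVec m v,
    eq_smul_single_add_graphMatrix_mulVec m w]
  change (_ • e + _) ⬝ᵥ (P *ᵥ (_ • e + _)) = _
  simp only [mulVec_add, mulVec_smul, add_dotProduct, dotProduct_add, smul_dotProduct,
    dotProduct_smul, horth, horth', hdiag, hgraph, smul_eq_mul]
  ring

theorem Hurwitz.exists_graph_coordinates {N : Matrix (Fin 1 ⊕ ι) (Fin 1 ⊕ ι) ℝ}
    (hN : Hurwitz N) :
    ∃ (m : ι → ℝ) (Q : Matrix ι ι ℝ), Q.PosDef ∧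
      (-(Q * (N * graphMatrix m).toRows₂ + (N * graphMatrix m).toRows₂ᵀ * Q)).PosDef ∧
      ∀ v ≠ 0, 2 * ((v ∘ .inr) ⬝ᵥ (Q *ᵥ ((N *ᵥ v) ∘ .inr))) +
        (v (.inl 0) - m ⬝ᵥ (v ∘ .inr)) * ((N *ᵥ v) (.inl 0) - m ⬝ᵥ ((N *ᵥ v) ∘ .inr)) < 0 := by
  obtain ⟨P, hP, hPN⟩ := hN.exists_lyapunov
  obtain ⟨m, hm⟩ := exists_dotProduct_mulVec_eq_add_graphMatrix hP
  have ha : 0 < P (.inl 0) (.inl 0) := hP.diag_pos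
  let Q := (2 * P (.inl 0) (.inl 0))⁻¹ • ((graphMatrix m)ᵀ * P * graphMatrix m)
  have hQ : Q.PosDef :=
    (hP.conjTranspose_mul_mul_same (graphMatrix_mulVec_injective m)).smul (by positivity)
  have hneg (v : Fin 1 ⊕ ι → ℝ) (hv : v ≠ 0) :
      2 * ((v ∘ .inr) ⬝ᵥ (Q *ᵥ ((N *ᵥ v) ∘ .inr))) +
        (v (.inl 0) - m ⬝ᵥ (v ∘ .inr)) * ((N *ᵥ v) (.inl 0) - m ⬝ᵥ ((N *ᵥ v) ∘ .inr)) < 0 := by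
    have hPneg := (posDef_neg_lyapunov_iff hP.isHermitian).1 hPN v hv
    rw [hm] at hPneg
    rw [smul_mulVec, dotProduct_smul, smul_eq_mul]
    refine neg_of_mul_neg_right (lt_of_eq_of_lt ?_ hPneg) ha.le
    field_simp
    ring
  refine ⟨m, Q, hQ, (posDef_neg_lyapunov_iff hQ.isHermitian).2 fun x hx => ?_, hneg⟩
  have hgraph : graphMatrix m *ᵥ x ≠ 0 := fun h =>
    hx (graphMatrix_mulVec_injective m (h.trans (mulVec_zero _).symm))
  have hrows : (N * graphMatrix m).toRows₂ *ᵥ x = (N *ᵥ (graphMatrix m *ᵥ x)) ∘ .inr := by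
    rw [mulVec_mulVec]
    rfl
  rw [hrows]
  have hx' := hneg _ hgraph
  simp only [graphMatrix_mulVec, Sum.elim_inl, Sum.elim_comp_inr, sub_self, zero_mul,
    add_zero] at hx' ⊢
  linarith

end SchurComplement

section Coordinates

variable {n p : ℕ}

/-- The input matrix `G`, with rows `G i`, as a continuous linear map. -/
def inputMap (G : Fin n → Fin p → ℝ) : (Fin p → ℝ) →L[ℝ] (Fin n → ℝ) :=
  (of G).mulVecLin.toContinuousLinearMap

@[simp]
lemma inputMap_apply (G : Fin n → Fin p → ℝ) (u : Fin p → ℝ) : inputMap G u = of G *ᵥ u :=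
  rfl

lemma contDiff_inputMap_comp {g : (Fin n → ℝ) → Fin n → Fin p → ℝ} (hg : ContDiff ℝ 1 g) :
    ContDiff ℝ 1 fun x => inputMap (g x) := by
  refine contDiff_clm_apply_iff.2 fun u => contDiff_pi.2 fun i => ?_
  simp only [inputMap_apply, mulVec, dotProduct, of_apply]
  fun_prop

lemma isControlLyapunov_inputMap {f : (Fin n → ℝ) → Fin n → ℝ}
    {g : (Fin n → ℝ) → Fin n → Fin p → ℝ} {V : (Fin n → ℝ) → ℝ} (hV : ContDiff ℝ 1 V)
    (hproper : IsProper V) (hpos : IsPosDefFn V)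
    (hneg : ∀ x ≠ 0, (∀ i, fderiv ℝ V x (fun k => g x k i) = 0) → fderiv ℝ V x (f x) < 0) :
    IsControlLyapunov f (fun x => inputMap (g x)) V where
  contDiff := hV
  isProper := hproper
  isPosDefFn := hpos
  exists_neg x hx := by
    simp only [map_add]
    refine exists_add_clm_neg_iff (b := fderiv ℝ V x ∘L inputMap (g x)).2 fun hb =>
      hneg x hx fun i => ?_
    simpa using! congr($hb (Pi.single i 1))

lemma fderiv_fderiv_apply_eq_dotProduct_hessianAt (V : (Fin n → ℝ) → ℝ) (x v w : Fin n → ℝ) :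
    fderiv ℝ (fderiv ℝ V) x v w = v ⬝ᵥ (hessianAt V x *ᵥ w) := by
  conv_lhs => rw [pi_eq_sum_univ' v, pi_eq_sum_univ' w]
  simp only [map_sum, map_smul, _root_.sum_apply, _root_.smul_apply, smul_eq_mul, hessianAt,
    iteratedFDeriv_two_apply, mulVec, dotProduct, of_apply, cons_val_zero, cons_val_one,
    Finset.mul_sum]
  rw [Finset.sum_comm]
  exact Finset.sum_congr rfl fun i _ => Finset.sum_congr rfl fun j _ => by ring

/-- The stacked vector `(y, x)` on which the block matrices of the linearization act. -/
def stack : (ℝ × (Fin n → ℝ)) ≃L[ℝ] (Fin 1 ⊕ Fin n → ℝ) :=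
  ((ContinuousLinearEquiv.funUnique (Fin 1) ℝ ℝ).symm.prodCongr (.refl ℝ (Fin n → ℝ))).trans
    (ContinuousLinearEquiv.sumPiEquivProdPi ℝ (Fin 1) (Fin n) fun _ => ℝ).symm

lemma stack_apply (z : ℝ × (Fin n → ℝ)) : stack z = Sum.elim (fun _ => z.1) z.2 := by
  ext i
  rcases i with i | i <;> rfl

/-- The linear feedback `(y, x) ↦ K (y, x)`. -/
def linearFeedback (K : Matrix (Fin p) (Fin 1 ⊕ Fin n) ℝ) : ℝ × (Fin n → ℝ) →L[ℝ] (Fin p → ℝ) :=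
  K.mulVecLin.toContinuousLinearMap ∘L stack.toContinuousLinearMap

lemma linearFeedback_apply (K : Matrix (Fin p) (Fin 1 ⊕ Fin n) ℝ) (z : ℝ × (Fin n → ℝ)) :
    linearFeedback K z = K *ᵥ stack z :=
  rfl

end Coordinates

section Linearization

variable {n p : ℕ} {h : (Fin n → ℝ) → ℝ} {f : (Fin n → ℝ) → Fin n → ℝ}
    {g : (Fin n → ℝ) → Fin n → Fin p → ℝ} {H : Fin n → ℝ} {F : Matrix (Fin n) (Fin n) ℝ}

/-- The matrix `A + B K` of the closed loop `ẏ = H x`, `ẋ = F x + G u`, `u = K (y, x)`. -/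
def closedLoopMatrix (H : Fin n → ℝ) (F : Matrix (Fin n) (Fin n) ℝ) (G : Matrix (Fin n) (Fin p) ℝ)
    (K : Matrix (Fin p) (Fin 1 ⊕ Fin n) ℝ) : Matrix (Fin 1 ⊕ Fin n) (Fin 1 ⊕ Fin n) ℝ :=
  fromBlocks 0 (of fun _ => H) 0 F + fromRows 0 G * K

lemma toRows₂_closedLoopMatrix_mul_graphMatrix (G : Matrix (Fin n) (Fin p) ℝ)
    (K : Matrix (Fin p) (Fin 1 ⊕ Fin n) ℝ) (m : Fin n → ℝ) :
    (closedLoopMatrix H F G K * graphMatrix m).toRows₂ = F + G * (K * graphMatrix m) := by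
  rw [closedLoopMatrix, Matrix.add_mul, Matrix.mul_assoc, fromRows_mul]
  conv_lhs => rw [graphMatrix, fromBlocks_mul_fromRows]
  ext i j
  simp [toRows₂, graphMatrix]

lemma stack_forwardingLinearization (hh : DifferentiableAt ℝ h 0) (hf : DifferentiableAt ℝ f 0)
    (hH : ∀ v, fderiv ℝ h 0 v = H ⬝ᵥ v) (hF : ∀ v, fderiv ℝ f 0 v = F *ᵥ v)
    (K : Matrix (Fin p) (Fin 1 ⊕ Fin n) ℝ) (z : ℝ × (Fin n → ℝ)) :
    stack (forwardingLinearization (fun x => (h x, f x))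
      (fun x => .inr ℝ ℝ (Fin n → ℝ) ∘L inputMap (g x)) (linearFeedback K) z) =
    closedLoopMatrix H F (of (g 0)) K *ᵥ stack z := by
  rw [closedLoopMatrix, add_mulVec, ← mulVec_mulVec, ← linearFeedback_apply, fromBlocks_mulVec,
    fromRows_mulVec, stack_apply, forwardingLinearization, hh.fderiv_prodMk hf]
  ext i
  rcases i with i | i <;> simp [hH, hF, stack_apply]
  rfl

end Linearization

theorem stmt5_general {nx p : ℕ}
    (h : (Fin nx → ℝ) → ℝ) (f : (Fin nx → ℝ) → (Fin nx → ℝ))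
    (g : (Fin nx → ℝ) → Fin nx → Fin p → ℝ)
    (hh : ContDiff ℝ 1 h) (hf : ContDiff ℝ 1 f) (hg : ContDiff ℝ 1 g)
    (hh0 : h 0 = 0) (hf0 : f 0 = 0)
    (H : Fin nx → ℝ) (F : Matrix (Fin nx) (Fin nx) ℝ)
    (hH : ∀ v, fderiv ℝ h 0 v = H ⬝ᵥ v)
    (hF : ∀ v, fderiv ℝ f 0 v = F.mulVec v)
    (A : Matrix (Fin 1 ⊕ Fin nx) (Fin 1 ⊕ Fin nx) ℝ)
    (B : Matrix (Fin 1 ⊕ Fin nx) (Fin p) ℝ)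
    (hA : A = Matrix.fromBlocks 0 (Matrix.of fun (_ : Fin 1) j => H j) 0 F)
    (hB : B = Matrix.of fun i j => Sum.elim (fun _ => (0 : ℝ)) (fun k => g 0 k j) i)
    (hass : ∀ (Kx : Matrix (Fin p) (Fin nx) ℝ) (Px : Matrix (Fin nx) (Fin nx) ℝ),
      Px.PosDef →
      (-(Px * (F + Matrix.of (g 0) * Kx)
          + (F + Matrix.of (g 0) * Kx)ᵀ * Px)).PosDef →
      ∃ Vx : (Fin nx → ℝ) → ℝ, ContDiff ℝ 2 Vx ∧
        IsProper Vx ∧ IsPosDefFn Vx ∧ ((1 : ℝ) / 2) • hessianAt Vx 0 = Px ∧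
        ∀ x : Fin nx → ℝ, x ≠ 0 →
          (∀ i, fderiv ℝ Vx x (fun k => g x k i) = 0) → fderiv ℝ Vx x (f x) < 0)
    (K : Matrix (Fin p) (Fin 1 ⊕ Fin nx) ℝ)
    (hHurwitz : Hurwitz (A + B * K)) :
    ∃ α₀ : (ℝ × (Fin nx → ℝ)) → (Fin p → ℝ), ContDiff ℝ (⊤ : ℕ∞) α₀ ∧ α₀ 0 = 0 ∧
      (∀ v : ℝ × (Fin nx → ℝ), fderiv ℝ α₀ 0 v
        = fun i => K i (Sum.inl 0) * v.1 + ∑ j, K i (Sum.inr j) * v.2 j) ∧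
      IsGAS (fun z : ℝ × (Fin nx → ℝ) =>
        (h z.2, f z.2 + (Matrix.of (g z.2)).mulVec (α₀ z))) := by
  have hN : A + B * K = closedLoopMatrix H F (of (g 0)) K := by
    rw [hA, hB, closedLoopMatrix]
    congr 2
    ext (i | i) j <;> rfl
  obtain ⟨m, Q, hQ, hQneg, hneg⟩ := (hN ▸ hHurwitz).exists_graph_coordinates
  rw [toRows₂_closedLoopMatrix_mul_graphMatrix] at hQneg
  obtain ⟨V, hV, hVproper, hVpos, hVhess, hVneg⟩ := hass _ Q hQ hQneg
  have hVhess' : hessianAt V 0 = (2 : ℝ) • Q := by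
    rw [← hVhess, smul_smul]
    norm_num
  obtain ⟨α, hα, hαK, hgas⟩ := exists_feedback_isGAS_forwarding (φ := fun x => (h x, f x))
    (γ := fun x => .inr ℝ ℝ _ ∘L inputMap (g x)) (k := linearFeedback K) (V := V)
    (dotProductBilin ℝ ℝ m).toContinuousLinearMap
    (isControlLyapunov_inputMap (hV.of_le one_le_two) hVproper hVpos hVneg) hV
    (hh.prodMk hf) (by simp [hh0, hf0])
    (contDiff_const.clm_comp (contDiff_inputMap_comp hg)) fun z hz => by
      have hz' := hneg (stack z) (stack.map_ne_zero_iff.2 hz)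
      rw [← stack_forwardingLinearization (hh.differentiable one_ne_zero 0)
        (hf.differentiable one_ne_zero 0) hH hF, stack_apply, stack_apply] at hz'
      simpa [fderiv_fderiv_apply_eq_dotProduct_hessianAt, hVhess', smul_mulVec] using hz'
  refine ⟨α, hα, by rw [hαK.eq_of_nhds, map_zero], fun v => ?_, by simpa using hgas⟩
  rw [hαK.fderiv_eq, (linearFeedback K).fderiv, linearFeedback_apply, stack_apply]
  ext i
  simp [mulVec, dotProduct]

/-- forwarding case. For the feedforward system
`y' = h x`, `x' = f x + g x · u` (`y` scalar), if the `x`-subsystem satisfies the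
local-behavior assumption (Assumption 3), then for every `K` making `A + BK` Hurwitz
there is a smooth feedback `α₀` with `α₀ 0 = 0` and `Dα₀(0) = K` rendering the origin of
the closed loop globally asymptotically stable. -/
theorem stmt5 {nx p : ℕ}
    (h : (Fin nx → ℝ) → ℝ) (f : (Fin nx → ℝ) → (Fin nx → ℝ))
    (g : (Fin nx → ℝ) → Fin nx → Fin p → ℝ)
    (hh : ContDiff ℝ (⊤ : ℕ∞) h) (hf : ContDiff ℝ (⊤ : ℕ∞) f) (hg : ContDiff ℝ (⊤ : ℕ∞) g)
    (hh0 : h 0 = 0) (hf0 : f 0 = 0)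
    -- first-order approximation data
    (H : Fin nx → ℝ) (F : Matrix (Fin nx) (Fin nx) ℝ)
    (hH : ∀ v, fderiv ℝ h 0 v = H ⬝ᵥ v)
    (hF : ∀ v, fderiv ℝ f 0 v = F.mulVec v)
    (A : Matrix (Fin 1 ⊕ Fin nx) (Fin 1 ⊕ Fin nx) ℝ)
    (B : Matrix (Fin 1 ⊕ Fin nx) (Fin p) ℝ)
    (hA : A = Matrix.fromBlocks 0 (Matrix.of fun (_ : Fin 1) j => H j) 0 F)
    (hB : B = Matrix.of fun i j => Sum.elim (fun _ => (0:ℝ)) (fun k => g 0 k j) i)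
    -- Assumption 3: prescribed local behavior is solvable for the `x`-subsystem
    (hass : ∀ (Kx : Matrix (Fin p) (Fin nx) ℝ) (Px : Matrix (Fin nx) (Fin nx) ℝ),
      Px.PosDef →
      (-(Px * (F + Matrix.of (g 0) * Kx)
          + (F + Matrix.of (g 0) * Kx)ᵀ * Px)).PosDef →
      ∃ Vx : (Fin nx → ℝ) → ℝ, ContDiff ℝ (⊤ : ℕ∞) Vx ∧ (∀ x, 0 ≤ Vx x) ∧
        IsProper Vx ∧ IsPosDefFn Vx ∧ ((1:ℝ)/2) • hessianAt Vx 0 = Px ∧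
        ∀ x : Fin nx → ℝ, x ≠ 0 →
          (∀ i, fderiv ℝ Vx x (fun k => g x k i) = 0) → fderiv ℝ Vx x (f x) < 0)
    (K : Matrix (Fin p) (Fin 1 ⊕ Fin nx) ℝ)
    (hHurwitz : Hurwitz (A + B * K)) :
    ∃ α₀ : (ℝ × (Fin nx → ℝ)) → (Fin p → ℝ), ContDiff ℝ (⊤ : ℕ∞) α₀ ∧ α₀ 0 = 0 ∧
      (∀ v : ℝ × (Fin nx → ℝ), fderiv ℝ α₀ 0 v
        = fun i => K i (Sum.inl 0) * v.1 + ∑ j, K i (Sum.inr j) * v.2 j) ∧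
      IsGAS (fun z : ℝ × (Fin nx → ℝ) =>
        (h z.2, f z.2 + (Matrix.of (g z.2)).mulVec (α₀ z))) :=
  stmt5_general h f g (contDiff_infty.1 hh 1) (contDiff_infty.1 hf 1)
    (contDiff_infty.1 hg 1) hh0 hf0 H F hH hF A B hA hB
    (fun Kx Px hP hPneg => (hass Kx Px hP hPneg).imp fun _ hV =>
      ⟨contDiff_infty.1 hV.1 2, hV.2.2⟩) K hHurwitz
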